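/- (Main Theorem) The normalized Miller-Rabin witness sets W(n)/n ⊂ [0,1] become equidistributed as n → ∞ through odd composite integers: for every 0 ≤ a ≤ b ≤ 1, #{w ∈ W(n) : a ≤ w/n ≤ b} / #W(n) → b - a. -/

import Mathlib

open Finset Filter

/-- The 2-adic valuation of n - 1. -/
def s2 (n : ℕ) : ℕ := (n - 1).factorization 2

/-- The odd part of n - 1. -/
def oddPart (n : ℕ) : ℕ := (n - 1) / 2 ^ s2 n

/-- The Miller-Rabin witness set of n. -/
def witnessSet (n : ℕ) : Finset ℕ :=
  (Finset.range n).filter (fun a => 1 < a ∧ Nat.gcd a n = 1 ∧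
    (a : ZMod n) ^ oddPart n ≠ 1 ∧ ∀ j < s2 n, (a : ZMod n) ^ (2 ^ j * oddPart n) ≠ -1)

section Weyl

open MeasureTheory Topology BoundedContinuousFunction

/-- A family of probability measures on the circle converges weakly as soon as its Fourier
coefficients converge. -/
theorem tendsto_probabilityMeasure_of_fourier {ι : Type*} {l : Filter ι}
    {μ : ι → ProbabilityMeasure UnitAddCircle} {μ₀ : ProbabilityMeasure UnitAddCircle}
    (h : ∀ k : ℤ, Tendsto (fun i => ∫ x, fourier k x ∂(μ i : Measure UnitAddCircle)) l
      (𝓝 (∫ x, fourier k x ∂(μ₀ : Measure UnitAddCircle)))) :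
    Tendsto μ l (𝓝 μ₀) := by
  refine ProbabilityMeasure.tendsto_of_tight_of_separatesPoints ℂ
    (IsTightMeasureSet.of_compactSpace)
    (A := (fourierSubalgebra (T := 1)).comap (toContinuousMapStarₐ ℂ)) ?_ ?_
  · intro x y hxy
    obtain ⟨f, ⟨g, hg, rfl⟩, hf⟩ := fourierSubalgebra_separatesPoints (T := 1) hxy
    exact ⟨g, ⟨g, ⟨mkOfCompact g, hg, rfl⟩, rfl⟩, hf⟩
  · intro g hg
    have key : ∀ f ∈ Submodule.span ℂ (Set.range (fourier (T := 1))),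
        Tendsto (fun i => ∫ x, f x ∂(μ i : Measure UnitAddCircle)) l
          (𝓝 (∫ x, f x ∂(μ₀ : Measure UnitAddCircle))) := by
      have hint (f : C(UnitAddCircle, ℂ)) (ν : ProbabilityMeasure UnitAddCircle) :
          Integrable f (ν : Measure UnitAddCircle) :=
        (mkOfCompact f).integrable _
      intro f hf
      induction hf using Submodule.span_induction with
      | mem f hf => obtain ⟨k, rfl⟩ := hf; exact h k
      | zero => simpa using tendsto_const_nhds
      | add f g _ _ hf hg =>
        simpa [integral_add (hint f _) (hint g _)] using hf.add hg
      | smul c f _ hf => simpa [integral_const_mul] using hf.const_mul c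
    refine key g.toContinuousMap ?_
    rw [← fourierSubalgebra_coe]
    exact hg

/-- The average of the Dirac masses at the points `x w`, `w ∈ s`. -/
noncomputable def averageDirac {α : Type*} (s : Finset α) (x : α → UnitAddCircle) :
    Measure UnitAddCircle :=
  (#s : ENNReal)⁻¹ • ∑ w ∈ s, Measure.dirac (x w)

theorem isProbabilityMeasure_averageDirac {α : Type*} {s : Finset α} (hs : s.Nonempty)
    (x : α → UnitAddCircle) : IsProbabilityMeasure (averageDirac s x) := by
  constructor
  simp [averageDirac]
  exact ENNReal.inv_mul_cancel (by simpa using hs.ne_empty) (by simp)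

theorem integral_averageDirac {α : Type*} (s : Finset α) (x : α → UnitAddCircle)
    (f : C(UnitAddCircle, ℂ)) :
    ∫ y, f y ∂(averageDirac s x) = (∑ w ∈ s, f (x w)) / #s := by
  rw [averageDirac, integral_smul_measure, integral_finsetSum_measure]
  · simp [div_eq_inv_mul]
  · exact fun _ _ => (mkOfCompact f).integrable _

theorem averageDirac_apply {α : Type*} (s : Finset α) (x : α → UnitAddCircle)
    {E : Set UnitAddCircle} (hE : MeasurableSet E) [DecidablePred fun w => x w ∈ E] :
    averageDirac s x E = (#s : ENNReal)⁻¹ * #{w ∈ s | x w ∈ E} := by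
  simp [averageDirac, Measure.dirac_apply' _ hE, Set.indicator_apply, Finset.sum_boole]

theorem integral_fourier_volume {k : ℤ} (hk : k ≠ 0) :
    ∫ x : UnitAddCircle, fourier k x = 0 :=
  integral_eq_zero_of_add_right_eq_neg (fourier_add_half_inv_index hk one_pos)

theorem frontier_coe_image_Icc_subset (a b : ℝ) :
    frontier ((↑) '' Set.Icc a b : Set UnitAddCircle) ⊆
      {(a : UnitAddCircle), (b : UnitAddCircle)} := by
  have hclosed : IsClosed ((↑) '' Set.Icc a b : Set UnitAddCircle) :=
    (isCompact_Icc.image (AddCircle.continuous_mk' 1)).isClosed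
  have hopen : IsOpen ((↑) '' Set.Ioo a b : Set UnitAddCircle) :=
    QuotientAddGroup.isOpenMap_coe _ isOpen_Ioo
  rw [hclosed.frontier_eq]
  rintro _ ⟨⟨x, hx, rfl⟩, hx'⟩
  have : ¬ x ∈ Set.Ioo a b := fun h => hx' <|
    interior_maximal (Set.image_mono Set.Ioo_subset_Icc_self) hopen ⟨x, h, rfl⟩
  rcases Set.eq_endpoints_or_mem_Ioo_of_mem_Icc hx with rfl | rfl | h
  · simp
  · simp
  · exact absurd h this

theorem coe_mem_image_Icc_iff {a b y : ℝ} (ha : 0 ≤ a) (hb : b ≤ 1) (hy : y ∈ Set.Ioo (0 : ℝ) 1) :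
    (y : UnitAddCircle) ∈ ((↑) '' Set.Icc a b : Set UnitAddCircle) ↔ y ∈ Set.Icc a b := by
  refine ⟨?_, fun h => ⟨y, h, rfl⟩⟩
  rintro ⟨x, hx, hxy⟩
  rw [← sub_eq_zero, ← AddCircle.coe_sub, AddCircle.coe_eq_zero_iff] at hxy
  obtain ⟨m, hm⟩ := hxy
  rw [zsmul_one] at hm
  have h1 : (m : ℝ) < 1 := by linarith [hx.2, hy.1]
  have h2 : (-1 : ℝ) < m := by linarith [hx.1, hy.2]
  have h3 : m < 1 := by exact_mod_cast h1
  have h4 : -1 < m := by exact_mod_cast h2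
  obtain rfl : m = 0 := by omega
  rw [Int.cast_zero] at hm
  rwa [sub_eq_zero.1 hm.symm] at hx

theorem volume_coe_image_Icc {a b : ℝ} (ha : 0 ≤ a) (hb : b ≤ 1) :
    volume ((↑) '' Set.Icc a b : Set UnitAddCircle) = ENNReal.ofReal (b - a) := by
  have hclosed : IsClosed ((↑) '' Set.Icc a b : Set UnitAddCircle) :=
    (isCompact_Icc.image (AddCircle.continuous_mk' 1)).isClosed
  rw [AddCircle.add_projection_respects_measure 1 0 hclosed.measurableSet, zero_add,
    measure_congr ((ae_eq_refl _).inter Ioo_ae_eq_Ioc.symm)]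
  have : ((↑) ⁻¹' ((↑) '' Set.Icc a b : Set UnitAddCircle) ∩ Set.Ioo (0 : ℝ) 1)
      = Set.Icc a b ∩ Set.Ioo 0 1 := by
    ext y
    exact and_congr_left fun hy => coe_mem_image_Icc_iff ha hb hy
  erw [this]
  rw [measure_congr ((ae_eq_refl _).inter Ioo_ae_eq_Icc),
    Set.inter_eq_left.2 (Set.Icc_subset_Icc ha hb), Real.volume_Icc]

/-- **Weyl's criterion** for finite families of points of `(0, 1)`. -/
theorem tendsto_card_filter_div_card_of_fourier {ι α : Type*} {l : Filter ι} (s : ι → Finset α)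
    (x : ι → α → ℝ) (hs : ∀ᶠ i in l, (s i).Nonempty)
    (hx : ∀ᶠ i in l, ∀ w ∈ s i, x i w ∈ Set.Ioo (0 : ℝ) 1)
    (h : ∀ k : ℤ, k ≠ 0 → Tendsto
      (fun i => (∑ w ∈ s i, fourier k (x i w : UnitAddCircle)) / (#(s i) : ℂ)) l (𝓝 0))
    {a b : ℝ} (ha : 0 ≤ a) (hab : a ≤ b) (hb : b ≤ 1) :
    Tendsto (fun i => (#{w ∈ s i | a ≤ x i w ∧ x i w ≤ b} : ℝ) / #(s i)) l (𝓝 (b - a)) := by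
  classical
  let μ₀ : ProbabilityMeasure UnitAddCircle := ⟨volume, ⟨by simp [AddCircle.measure_univ]⟩⟩
  let μ : ι → ProbabilityMeasure UnitAddCircle := fun i =>
    if hi : (s i).Nonempty then
      ⟨averageDirac (s i) fun w => x i w, isProbabilityMeasure_averageDirac hi _⟩
    else μ₀
  have hμ : ∀ i, (s i).Nonempty →
      (μ i : Measure UnitAddCircle) = averageDirac (s i) fun w => x i w := fun i hi => by
    simp [μ, hi]
  have hlim : Tendsto μ l (𝓝 μ₀) := by
    refine tendsto_probabilityMeasure_of_fourier fun k => ?_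
    rcases eq_or_ne k 0 with rfl | hk
    · simpa using tendsto_const_nhds
    · refine Tendsto.congr' ?_ ((integral_fourier_volume hk).symm ▸ h k hk)
      filter_upwards [hs] with i hi
      rw [hμ i hi, integral_averageDirac]
  have hmeas : IsClosed ((↑) '' Set.Icc a b : Set UnitAddCircle) :=
    (isCompact_Icc.image (AddCircle.continuous_mk' 1)).isClosed
  have hfront : (μ₀ : Measure UnitAddCircle)
      (frontier ((↑) '' Set.Icc a b : Set UnitAddCircle)) = 0 := by
    refine measure_mono_null (frontier_coe_image_Icc_subset a b) ?_
    have hsing (y : UnitAddCircle) : volume ({y} : Set UnitAddCircle) = 0 := by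
      rw [← Metric.closedBall_zero, AddCircle.volume_closedBall]
      simp
    exact measure_union_null (hsing a) (hsing b)
  have key := ProbabilityMeasure.tendsto_measure_of_null_frontier_of_tendsto' hlim hfront
  have key' := (ENNReal.tendsto_toReal (measure_ne_top _ _)).comp key
  have hvol : ((μ₀ : Measure UnitAddCircle)
      ((↑) '' Set.Icc a b : Set UnitAddCircle)).toReal = b - a := by
    change (volume ((↑) '' Set.Icc a b : Set UnitAddCircle)).toReal = _
    rw [volume_coe_image_Icc ha hb, ENNReal.toReal_ofReal (by linarith)]
  rw [hvol] at key'
  refine key'.congr' ?_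
  filter_upwards [hs, hx] with i hi hxi
  rw [Function.comp_apply, hμ i hi, averageDirac_apply _ _ hmeas.measurableSet,
    Finset.filter_congr fun w hw => coe_mem_image_Icc_iff ha hb (hxi w hw)]
  simp [div_eq_inv_mul]

end Weyl

section ExponentialSums

open ZMod

theorem sum_normSq_sum_stdAddChar {n : ℕ} [NeZero n] (A : Finset (ZMod n)) :
    ∑ t : ZMod n, ‖∑ a ∈ A, stdAddChar (t * a)‖ ^ 2 = n * #A := by
  have key : ∑ t : ZMod n, (∑ a ∈ A, stdAddChar (t * a)) *
      (starRingEnd ℂ) (∑ a ∈ A, stdAddChar (t * a)) = n * #A := by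
    have h (t a b : ZMod n) : stdAddChar (t * a) * (starRingEnd ℂ) (stdAddChar (t * b)) =
        stdAddChar (t * (a - b)) := by
      rw [← AddChar.map_neg_eq_conj, ← AddChar.map_add_eq_mul]; ring_nf
    simp_rw [map_sum, sum_mul_sum, h]
    rw [sum_comm]
    simp_rw [sum_comm (s := (univ : Finset (ZMod n))),
      AddChar.sum_mulShift _ (isPrimitive_stdAddChar n), sub_eq_zero]
    simp [mul_comm]
  simp_rw [Complex.mul_conj'] at key
  exact_mod_cast key

theorem card_filter_intCast_mul_eq_le {n : ℕ} [NeZero n] {k : ℤ} (hk : k ≠ 0) (t : ZMod n)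
    (s : Finset (ZMod n)) : #{x ∈ s | (k : ZMod n) * x = t} ≤ k.natAbs := by
  classical
  obtain h | ⟨x₀, hx₀⟩ := Finset.eq_empty_or_nonempty {x ∈ s | (k : ZMod n) * x = t}
  · simp [h]
  refine le_trans ?_ (IsAddCyclic.card_nsmul_eq_zero_le (α := ZMod n) (Int.natAbs_pos.2 hk))
  refine card_le_card_of_injOn (· - x₀) (fun x hx => ?_) fun x _ y _ h => sub_left_injective h
  simp only [coe_filter, Set.mem_ofPred_eq, mem_filter] at hx hx₀ ⊢
  refine ⟨mem_univ _, ?_⟩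
  rw [natAbs_nsmul_eq_zero, zsmul_eq_mul, mul_sub, hx.2, hx₀.2, sub_self]

/-- A set of residues stable under multiplication by at least as many units as it has elements
has square-root cancellation in its exponential sums. -/
theorem norm_sum_stdAddChar_le_of_stable {n : ℕ} [NeZero n] {k : ℤ} (hk : k ≠ 0)
    (A : Finset (ZMod n)) (H : Finset (ZMod n)ˣ) (hcard : #A ≤ #H)
    (hH : ∀ h ∈ H, ∀ a ∈ A, (h : ZMod n) * a ∈ A) :
    ‖∑ a ∈ A, stdAddChar ((k : ZMod n) * a)‖ ≤ √(k.natAbs * n) := by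
  classical
  set S : ZMod n → ℝ := fun t => ‖∑ a ∈ A, stdAddChar (t * a)‖ ^ 2 with hS
  have hSH : ∀ h ∈ H, S (k * (h : ZMod n)) = S k := by
    intro h hh
    have himage : A.image ((h : ZMod n) * ·) = A :=
      eq_of_subset_of_card_le (fun x hx => by
        obtain ⟨a, ha, rfl⟩ := mem_image.1 hx
        exact hH h hh a ha) (card_image_of_injective _ h.isUnit.mul_right_injective).ge
    simp only [hS]
    conv_rhs => rw [← himage]
    rw [sum_image h.isUnit.mul_right_injective.injOn]
    simp_rw [mul_assoc]
  have hle : #H * S k ≤ k.natAbs * (n * #A) := by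
    calc #H * S k = ∑ h ∈ H.map ⟨_, Units.val_injective⟩, S (k * h) := by
          rw [sum_map, ← nsmul_eq_mul, ← sum_const]
          exact sum_congr rfl fun h hh => (hSH h hh).symm
      _ ≤ ∑ t ∈ (H.map ⟨_, Units.val_injective⟩).image ((k : ZMod n) * ·), k.natAbs * S t := by
          rw [sum_comp S ((k : ZMod n) * ·)]
          refine sum_le_sum fun t _ => ?_
          rw [nsmul_eq_mul]
          refine mul_le_mul_of_nonneg_right ?_ (by simp only [hS]; positivity)
          exact_mod_cast card_filter_intCast_mul_eq_le hk t _
      _ ≤ ∑ t, k.natAbs * S t :=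
          sum_le_sum_of_subset_of_nonneg (subset_univ _) fun t _ _ => by simp only [hS]; positivity
      _ = k.natAbs * (n * #A) := by rw [← mul_sum, sum_normSq_sum_stdAddChar]
  rcases A.eq_empty_or_nonempty with rfl | hA
  · simpa using by positivity
  refine Real.le_sqrt_of_sq_le ?_
  have hpos : (0 : ℝ) < #A := by exact_mod_cast hA.card_pos
  have hcard' : (#A : ℝ) ≤ #H := by exact_mod_cast hcard
  have hS0 : 0 ≤ S k := by simp only [hS]; positivity
  change S k ≤ _
  refine le_of_mul_le_mul_left ?_ hpos
  nlinarith [mul_le_mul_of_nonneg_right hcard' hS0]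

theorem norm_sum_stdAddChar_pow_eq_le {n : ℕ} [NeZero n] {k : ℤ} (hk : k ≠ 0) (m : ℕ)
    (z : (ZMod n)ˣ) :
    ‖∑ u : (ZMod n)ˣ with u ^ m = z, stdAddChar ((k : ZMod n) * (u : ZMod n))‖ ≤
      √(k.natAbs * n) := by
  classical
  have h := norm_sum_stdAddChar_le_of_stable hk
    (({u : (ZMod n)ˣ | u ^ m = z} : Finset _).map ⟨_, Units.val_injective⟩)
    {u : (ZMod n)ˣ | u ^ m = 1} ?_ ?_
  · simpa only [sum_map, Function.Embedding.coeFn_mk] using h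
  · rw [card_map]
    obtain h | ⟨u₀, hu₀⟩ := Finset.eq_empty_or_nonempty ({u : (ZMod n)ˣ | u ^ m = z} : Finset _)
    · simp [h]
    refine card_le_card_of_injOn (· / u₀) (fun u hu => ?_) fun u _ v _ h => div_left_injective h
    simp only [coe_filter, mem_univ, true_and, Set.mem_ofPred_eq, mem_filter] at hu hu₀ ⊢
    rw [div_pow, hu, hu₀, div_self']
  · simp only [mem_filter, mem_univ, true_and, Finset.mem_map, Function.Embedding.coeFn_mk]
    rintro h hh _ ⟨u, hu, rfl⟩
    exact ⟨h * u, by rw [mul_pow, hh, hu, one_mul], by simp⟩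

end ExponentialSums

section UnitWitnesses

open ZMod

theorem pow_two_pow_mul_eq_one_of_lt {M : Type*} [Monoid M] [HasDistribNeg M] {u : M} {i j d : ℕ}
    (hij : i < j) (h : u ^ (2 ^ i * d) = -1) : u ^ (2 ^ j * d) = 1 := by
  obtain ⟨c, rfl⟩ := Nat.exists_eq_add_of_lt hij
  rw [show 2 ^ (i + c + 1) * d = (2 ^ i * d) * (2 * 2 ^ c) by ring, pow_mul, h, pow_mul]
  simp

/-- The units `u` modulo `n` with `u ^ d ≠ 1` and `u ^ (2 ^ i * d) ≠ -1` for all `i < j`. -/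
def unitWitnesses (n d j : ℕ) [NeZero n] : Finset (ZMod n)ˣ :=
  {u | u ^ d ≠ 1 ∧ ∀ i < j, u ^ (2 ^ i * d) ≠ -1}

theorem neg_one_ne_one_units {n : ℕ} (hn : 2 < n) : (-1 : (ZMod n)ˣ) ≠ 1 := by
  have : Fact (2 < n) := ⟨hn⟩
  intro h
  exact ZMod.neg_one_ne_one (n := n) (by simpa using congrArg Units.val h)

theorem witnessSet_eq_image {n : ℕ} [NeZero n] (hn : 2 < n) :
    witnessSet n =
      (unitWitnesses n (oddPart n) (s2 n)).image fun u : (ZMod n)ˣ => (u : ZMod n).val := by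
  have : Fact (1 < n) := ⟨by omega⟩
  ext w
  simp only [witnessSet, unitWitnesses, mem_filter, Finset.mem_range, mem_image, mem_univ, true_and]
  constructor
  · rintro ⟨hwn, -, hgcd, h1, h2⟩
    refine ⟨unitOfCoprime w hgcd, ⟨?_, fun i hi => ?_⟩, ?_⟩
    · simpa [Units.ext_iff] using h1
    · simpa [Units.ext_iff] using h2 i hi
    · simpa using Nat.mod_eq_of_lt hwn
  · rintro ⟨u, ⟨h1, h2⟩, rfl⟩
    refine ⟨ZMod.val_lt _, ?_, ZMod.val_coe_unit_coprime u, ?_, fun i hi => ?_⟩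
    · have h0 : (u : ZMod n).val ≠ 0 := by simp
      have h1' : (u : ZMod n).val ≠ 1 := by
        intro h
        have hu : u = 1 := by
          ext
          rw [← ZMod.natCast_zmod_val (u : ZMod n), h]
          simp
        exact h1 (by rw [hu, one_pow])
      omega
    · simpa [Units.ext_iff] using h1
    · simpa [Units.ext_iff] using h2 i hi

theorem injective_unit_val (n : ℕ) [NeZero n] :
    Function.Injective fun u : (ZMod n)ˣ => (u : ZMod n).val :=
  (ZMod.val_injective n).comp Units.val_injective

theorem card_witnessSet {n : ℕ} [NeZero n] (hn : 2 < n) :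
    #(witnessSet n) = #(unitWitnesses n (oddPart n) (s2 n)) := by
  rw [witnessSet_eq_image hn, card_image_of_injective _ (injective_unit_val n)]

theorem norm_le_add_of_norm_add_le {E : Type*} [SeminormedAddCommGroup E] {a b : E} {x y : ℝ}
    (ha : ‖a‖ ≤ x) (hab : ‖a + b‖ ≤ y) : ‖b‖ ≤ x + y := by
  have h := norm_sub_le (a + b) a
  rw [add_sub_cancel_left] at h
  linarith

theorem norm_sum_stdAddChar_unitWitnesses_le {n : ℕ} [NeZero n] (hn : 2 < n) {k : ℤ} (hk : k ≠ 0)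
    (d j : ℕ) :
    ‖∑ u ∈ unitWitnesses n d j, stdAddChar ((k : ZMod n) * (u : ZMod n))‖ ≤
      (j + 2) * √(k.natAbs * n) := by
  have hne := neg_one_ne_one_units hn
  induction j with
  | zero =>
    have hall := norm_sum_stdAddChar_pow_eq_le (n := n) hk 0 1
    have hone := norm_sum_stdAddChar_pow_eq_le (n := n) hk d 1
    simp only [pow_zero, filter_true] at hall
    rw [← sum_filter_add_sum_filter_not univ (fun u : (ZMod n)ˣ => u ^ d = 1)] at hall
    have heq : unitWitnesses n d 0 = ({u | ¬ u ^ d = 1} : Finset _) := by simp [unitWitnesses]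
    rw [heq]
    refine (norm_le_add_of_norm_add_le hone hall).trans_eq ?_
    push_cast
    ring
  | succ j ih =>
    have hj := norm_sum_stdAddChar_pow_eq_le (n := n) hk (2 ^ j * d) (-1)
    rw [← sum_filter_add_sum_filter_not _ (fun u : (ZMod n)ˣ => u ^ (2 ^ j * d) = -1)] at ih
    have h1 : ({u ∈ unitWitnesses n d j | u ^ (2 ^ j * d) = -1} : Finset _) =
        ({u | u ^ (2 ^ j * d) = -1} : Finset _) := by
      ext u
      simp only [unitWitnesses, mem_filter, mem_univ, true_and, and_iff_right_iff_imp]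
      refine fun hu => ⟨fun h => hne ?_, fun i hi h => hne ?_⟩
      · rw [← hu, pow_mul', h, one_pow]
      · rw [← hu, pow_two_pow_mul_eq_one_of_lt hi h]
    have h2 : ({u ∈ unitWitnesses n d j | ¬ u ^ (2 ^ j * d) = -1} : Finset _) =
        unitWitnesses n d (j + 1) := by
      ext u
      simp only [unitWitnesses, mem_filter, mem_univ, true_and, Nat.lt_succ_iff_lt_or_eq]
      grind
    rw [h1, h2] at ih
    refine (norm_le_add_of_norm_add_le hj ih).trans_eq ?_
    push_cast
    ring

theorem sum_fourier_witnessSet {n : ℕ} [NeZero n] (hn : 2 < n) (k : ℤ) :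
    ∑ w ∈ witnessSet n, fourier k (((w : ℝ) / n : ℝ) : UnitAddCircle) =
      ∑ u ∈ unitWitnesses n (oddPart n) (s2 n), stdAddChar ((k : ZMod n) * (u : ZMod n)) := by
  rw [witnessSet_eq_image hn, sum_image (injective_unit_val n).injOn]
  refine sum_congr rfl fun u _ => ?_
  rw [fourier_coe_apply]
  conv_rhs => rw [← ZMod.natCast_zmod_val (u : ZMod n)]
  have := stdAddChar_coe (N := n) (k * ((u : ZMod n).val : ℤ))
  push_cast at this ⊢
  rw [this]
  congr 1
  ring

theorem two_mul_card_unitWitnesses_of_subgroup {n d j : ℕ} [NeZero n] (K : Subgroup (ZMod n)ˣ)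
    (hK : K ≠ ⊤) (h : ∀ u ∉ unitWitnesses n d j, u ∈ K) :
    n.totient ≤ 2 * #(unitWitnesses n d j) := by
  obtain ⟨g, -, hg⟩ := SetLike.exists_of_lt hK.lt_top
  have hle : #(unitWitnesses n d j)ᶜ ≤ #(unitWitnesses n d j) := by
    refine card_le_card_of_injOn (g * ·) (fun u hu => ?_) (mul_right_injective g).injOn
    by_contra hgu
    have hu' := h u (mem_compl.1 hu)
    exact hg ((K.mul_mem_cancel_right hu').1 (h _ hgu))
  have := card_add_card_compl (unitWitnesses n d j)
  rw [ZMod.card_units_eq_totient] at this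
  omega

theorem notMem_unitWitnesses {n d j : ℕ} [NeZero n] {u : (ZMod n)ˣ} :
    u ∉ unitWitnesses n d j ↔ u ^ d = 1 ∨ ∃ i < j, u ^ (2 ^ i * d) = -1 := by
  simp only [unitWitnesses, mem_filter, mem_univ, true_and]
  grind

theorem totient_le_of_prime_sq_dvd {n p d s : ℕ} [NeZero n] (hp : p.Prime) (hpn : p ^ 2 ∣ n)
    (hds : 2 ^ s * d = n - 1) : n.totient ≤ 2 * #(unitWitnesses n d s) := by
  obtain ⟨m, rfl⟩ := hpn
  have hpos : 0 < p ^ 2 * m := Nat.pos_of_ne_zero (NeZero.ne _)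
  have hsq : ((p * m : ℕ) : ZMod (p ^ 2 * m)) ^ 2 = 0 := by
    rw [← Nat.cast_pow, ZMod.natCast_eq_zero_iff]
    exact ⟨m, by ring⟩
  set x : ZMod (p ^ 2 * m) := ((p * m : ℕ) : ZMod (p ^ 2 * m)) with hx
  have hx0 : x ≠ 0 := by
    rw [hx, Ne, ZMod.natCast_eq_zero_iff]
    intro h
    have hm : 0 < m := Nat.pos_of_mul_pos_left hpos
    have := Nat.le_of_dvd (Nat.mul_pos hp.pos hm) h
    nlinarith [hp.two_le, Nat.mul_pos hp.pos hm]
  let u : (ZMod (p ^ 2 * m))ˣ :=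
    ⟨1 + x, 1 - x, by linear_combination -hsq, by linear_combination -hsq⟩
  have hpow (N : ℕ) : (1 + x) ^ N = 1 + N * x := by
    induction N with
    | zero => simp
    | succ N ih =>
      rw [pow_succ (1 + x) N, ih]
      push_cast
      linear_combination (N : ZMod (p ^ 2 * m)) * hsq
  refine two_mul_card_unitWitnesses_of_subgroup (powMonoidHom (p ^ 2 * m - 1)).ker ?_ ?_
  · intro htop
    have hu : u ∈ (powMonoidHom (p ^ 2 * m - 1) : (ZMod (p ^ 2 * m))ˣ →* _).ker :=
      htop ▸ Subgroup.mem_top u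
    rw [MonoidHom.mem_ker, powMonoidHom_apply, Units.ext_iff] at hu
    change (1 + x) ^ (p ^ 2 * m - 1) = 1 at hu
    rw [hpow, Nat.cast_sub hpos, ZMod.natCast_self] at hu
    apply hx0
    push_cast at hu
    linear_combination -hu
  · intro v hv
    rw [MonoidHom.mem_ker, powMonoidHom_apply, ← hds]
    obtain hv | ⟨i, hi, hv⟩ := notMem_unitWitnesses.1 hv
    · rw [pow_mul', hv, one_pow]
    · exact pow_two_pow_mul_eq_one_of_lt hi hv

/-- The subgroup of elements whose `m`-th power is `1` or `-1`. -/
def powEqOneOrNegOne (n m : ℕ) : Subgroup (ZMod n)ˣ where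
  carrier := {u | u ^ m = 1 ∨ u ^ m = -1}
  one_mem' := by simp
  mul_mem' := by
    rintro a b (ha | ha) (hb | hb) <;> simp [mul_pow, ha, hb]
  inv_mem' := by
    rintro a (ha | ha) <;> simp [ha]

theorem exists_pow_ne_of_coprime {a b m : ℕ} (ha : 2 < a) (hb : 2 < b) (hab : a.Coprime b)
    {w : (ZMod (a * b))ˣ} (hw : w ^ m = -1) : powEqOneOrNegOne (a * b) m ≠ ⊤ := by
  have : Fact (2 < a) := ⟨ha⟩
  have : Fact (2 < b) := ⟨hb⟩
  let e := ZMod.chineseRemainder hab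
  have hinv : (e w).1 * (e (w⁻¹ : (ZMod (a * b))ˣ)).1 = 1 := by
    rw [← Prod.fst_mul, ← map_mul, Units.mul_inv, map_one, Prod.fst_one]
  let u : (ZMod (a * b))ˣ :=
    ⟨e.symm ((e w).1, 1), e.symm ((e (w⁻¹ : (ZMod (a * b))ˣ)).1, 1),
      by rw [← map_mul, Prod.mk_mul_mk, hinv, one_mul, ← Prod.one_eq_mk, map_one],
      by rw [← map_mul, Prod.mk_mul_mk, mul_comm (e _).1, hinv, one_mul, ← Prod.one_eq_mk, map_one]⟩
  have hwe : (e w) ^ m = -1 := by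
    rw [← map_pow, ← Units.val_pow_eq_pow_val, hw]
    simp
  have hu : e (u : ZMod (a * b)) ^ m = (-1, 1) := by
    have : e (u : ZMod (a * b)) = ((e w).1, 1) := by
      simp [u]
    rw [this]
    ext
    · simpa using congrArg Prod.fst hwe
    · simp
  intro htop
  have hmem : u ∈ powEqOneOrNegOne (a * b) m := htop ▸ Subgroup.mem_top u
  rcases hmem with h | h
  · have h' : e (u : ZMod (a * b)) ^ m = 1 := by
      rw [← map_pow, ← Units.val_pow_eq_pow_val, h]; simp
    rw [hu] at h'
    exact ZMod.neg_one_ne_one (congrArg Prod.fst h')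
  · have h' : e (u : ZMod (a * b)) ^ m = -1 := by
      rw [← map_pow, ← Units.val_pow_eq_pow_val, h]; simp
    rw [hu] at h'
    exact ZMod.neg_one_ne_one (congrArg Prod.snd h').symm

theorem totient_le_of_coprime {a b d s : ℕ} [NeZero (a * b)] (ha : 2 < a) (hb : 2 < b)
    (hab : a.Coprime b) (hd : Odd d) (hs : 0 < s) :
    (a * b).totient ≤ 2 * #(unitWitnesses (a * b) d s) := by
  classical
  let J : Finset ℕ := {j ∈ Finset.range s | ∃ w : (ZMod (a * b))ˣ, w ^ (2 ^ j * d) = -1}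
  have hJ : J.Nonempty := ⟨0, by
    simp only [J, mem_filter, Finset.mem_range]
    exact ⟨hs, -1, by simp [hd.neg_one_pow]⟩⟩
  obtain ⟨hjs, w, hw⟩ := mem_filter.1 (J.max'_mem hJ)
  refine two_mul_card_unitWitnesses_of_subgroup _ (exists_pow_ne_of_coprime ha hb hab hw) ?_
  intro v hv
  obtain hv | ⟨i, hi, hv⟩ := notMem_unitWitnesses.1 hv
  · left
    rw [pow_mul', hv, one_pow]
  · have hle : i ≤ J.max' hJ :=
      J.le_max' _ (mem_filter.2 ⟨Finset.mem_range.2 hi, v, hv⟩)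
    obtain ⟨c, hc⟩ := Nat.exists_eq_add_of_le hle
    change v ^ _ = 1 ∨ v ^ _ = -1
    rw [hc, show 2 ^ (i + c) * d = (2 ^ i * d) * 2 ^ c by ring, pow_mul, hv]
    exact neg_one_pow_eq_or _ _

theorem two_pow_s2_mul_oddPart (n : ℕ) : 2 ^ s2 n * oddPart n = n - 1 :=
  Nat.mul_div_cancel' (Nat.ordProj_dvd _ _)

/-- At least half of the units modulo an odd composite number are Miller-Rabin witnesses. -/
theorem totient_le_two_mul_card_witnessSet {n : ℕ} (hodd : Odd n) (hn : ¬ n.Prime) (h1 : 1 < n) :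
    n.totient ≤ 2 * #(witnessSet n) := by
  have : NeZero n := ⟨by omega⟩
  have h2 : 2 < n := by
    rcases (show 2 ≤ n from h1).lt_or_eq with h | rfl
    · exact h
    · exact absurd hodd (by decide)
  rw [card_witnessSet h2]
  obtain ⟨p, hp, hpn⟩ := Nat.exists_prime_and_dvd h1.ne'
  by_cases hsq : p ^ 2 ∣ n
  · exact totient_le_of_prime_sq_dvd hp hsq (two_pow_s2_mul_oddPart n)
  · obtain ⟨m, rfl⟩ := hpn
    obtain ⟨hop, hom⟩ := Nat.odd_mul.1 hodd
    have hp2 : p ≠ 2 := by rintro rfl; exact absurd hop (by decide)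
    have hm1 : m ≠ 1 := by rintro rfl; exact hn (by simpa using hp)
    have hm0 : m ≠ 0 := by rintro rfl; simp at h1
    have hm2 : m ≠ 2 := by rintro rfl; exact absurd hom (by decide)
    have hev : 2 ∣ p * m - 1 := (Nat.Odd.sub_odd hodd odd_one).two_dvd
    have hne : p * m - 1 ≠ 0 := by omega
    refine totient_le_of_coprime (by have := hp.two_le; omega) (by omega)
      ((Nat.Prime.coprime_iff_not_dvd hp).2 fun h => hsq ?_) ?_ ?_
    · rw [sq]; exact Nat.mul_dvd_mul_left p h
    · rw [← Nat.not_even_iff_odd, even_iff_two_dvd]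
      exact Nat.not_dvd_ordCompl Nat.prime_two hne
    · exact Nat.prime_two.factorization_pos_of_dvd hne hev

end UnitWitnesses

theorem Nat.pow_three_le_totient_pow_four {p e : ℕ} (hp : p.Prime) (hodd : Odd p) (he : 0 < e) :
    (p ^ e) ^ 3 ≤ (if 3 ∣ p ^ e then 2 else 1) * (p ^ e).totient ^ 4 := by
  obtain ⟨e, rfl⟩ := Nat.exists_eq_succ_of_ne_zero he.ne'
  have h3 : 3 ≤ p := by
    have := hp.two_le
    rcases this.lt_or_eq with h | rfl
    · exact h
    · exact absurd hodd (by decide)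
  have hbase : p ^ 3 ≤ (if 3 ∣ p ^ (e + 1) then 2 else 1) * (p - 1) ^ 4 := by
    rcases h3.lt_or_eq with h | rfl
    · have h1 : p ^ 3 ≤ (p - 1) ^ 4 := by
        obtain ⟨q, rfl⟩ : ∃ q, p = q + 4 := ⟨p - 4, by omega⟩
        simp only [show q + 4 - 1 = q + 3 by omega]
        nlinarith [sq_nonneg q, Nat.zero_le (q ^ 3), Nat.zero_le (q ^ 4)]
      split_ifs <;> omega
    · simp
  rw [Nat.totient_prime_pow_succ hp]
  calc (p ^ (e + 1)) ^ 3 = p ^ (3 * e) * p ^ 3 := by ring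
    _ ≤ p ^ (4 * e) * ((if 3 ∣ p ^ (e + 1) then 2 else 1) * (p - 1) ^ 4) := by
        gcongr
        · exact hp.one_le
        · norm_num
    _ = _ := by ring

theorem Odd.pow_three_le_two_mul_totient_pow_four {n : ℕ} (hn : Odd n) :
    n ^ 3 ≤ 2 * n.totient ^ 4 := by
  suffices h : n ^ 3 ≤ (if 3 ∣ n then 2 else 1) * n.totient ^ 4 by
    split_ifs at h <;> omega
  induction n using Nat.recOnPosPrimePosCoprime with
  | zero => simp at hn
  | one => simp
  | prime_pow p e hp he =>
    exact Nat.pow_three_le_totient_pow_four hp ((Nat.odd_pow_iff he.ne').1 hn) he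
  | coprime a b ha hb hab iha ihb =>
    obtain ⟨hoa, hob⟩ := Nat.odd_mul.1 hn
    have hc : (if 3 ∣ a then 2 else 1) * (if 3 ∣ b then 2 else 1) = if 3 ∣ a * b then 2 else 1 := by
      have : ¬ (3 ∣ a ∧ 3 ∣ b) := fun h => by
        have := Nat.dvd_gcd h.1 h.2
        rw [hab] at this
        omega
      by_cases h1 : 3 ∣ a <;> by_cases h2 : 3 ∣ b <;> simp_all [Nat.prime_three.dvd_mul]
    rw [← hc, Nat.totient_mul hab, mul_pow, mul_pow]
    calc _ ≤ _ := Nat.mul_le_mul (iha hoa) (ihb hob)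
      _ = _ := by ring

section Asymptotics

open Topology

theorem s2_le_two_mul_log {n : ℕ} (hn : 1 < n) : (s2 n : ℝ) ≤ 2 * Real.log n := by
  have hle : 2 ^ s2 n ≤ n :=
    (Nat.le_of_dvd (by omega) (Nat.ordProj_dvd (n - 1) 2)).trans (Nat.sub_le n 1)
  have hlog : (s2 n : ℝ) * Real.log 2 ≤ Real.log n := by
    rw [← Real.log_pow]
    exact Real.log_le_log (by positivity) (by exact_mod_cast hle)
  nlinarith [Real.log_two_gt_d9, Nat.cast_nonneg (α := ℝ) (s2 n)]

theorem rpow_le_four_mul_card_witnessSet {n : ℕ} (hodd : Odd n) (hn : ¬ n.Prime) (h1 : 1 < n) :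
    (n : ℝ) ^ (3 / 4 : ℝ) ≤ 4 * #(witnessSet n) := by
  have htot : (n.totient : ℝ) ≤ 2 * #(witnessSet n) := by
    exact_mod_cast totient_le_two_mul_card_witnessSet hodd hn h1
  have hpow : (n : ℝ) ^ 3 ≤ 2 * (n.totient : ℝ) ^ 4 := by
    exact_mod_cast hodd.pow_three_le_two_mul_totient_pow_four
  have h4 : ((n : ℝ) ^ (3 / 4 : ℝ)) ^ 4 = (n : ℝ) ^ 3 := by
    rw [← Real.rpow_natCast, ← Real.rpow_mul (Nat.cast_nonneg n), ← Real.rpow_natCast]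
    norm_num
  have : (n : ℝ) ^ (3 / 4 : ℝ) ≤ 2 * n.totient := by
    refine le_of_pow_le_pow_left₀ four_ne_zero (by positivity) ?_
    rw [h4, mul_pow]
    nlinarith [pow_nonneg (Nat.cast_nonneg (α := ℝ) n.totient) 4]
  linarith

theorem norm_sum_fourier_witnessSet_div_card_le {n : ℕ} (hodd : Odd n) (hn : ¬ n.Prime)
    (h1 : 1 < n) {k : ℤ} (hk : k ≠ 0) :
    ‖(∑ w ∈ witnessSet n, fourier k (((w : ℝ) / n : ℝ) : UnitAddCircle)) / (#(witnessSet n) : ℂ)‖ ≤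
      8 * √k.natAbs * ((Real.log n + 1) / (n : ℝ) ^ (1 / 4 : ℝ)) := by
  have : NeZero n := ⟨by omega⟩
  have h2 : 2 < n := by
    obtain ⟨m, rfl⟩ := hodd
    omega
  have hn0 : (0 : ℝ) < n := by positivity
  have hsplit : (n : ℝ) ^ (3 / 4 : ℝ) = √n * (n : ℝ) ^ (1 / 4 : ℝ) := by
    rw [Real.sqrt_eq_rpow, ← Real.rpow_add hn0]
    norm_num
  have hcard := rpow_le_four_mul_card_witnessSet hodd hn h1
  have hpos : 0 < (n : ℝ) ^ (3 / 4 : ℝ) := by positivity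
  have hsum := norm_sum_stdAddChar_unitWitnesses_le h2 hk (oddPart n) (s2 n)
  rw [norm_div, Complex.norm_natCast, sum_fourier_witnessSet h2]
  have hlog := s2_le_two_mul_log h1
  have hlog0 : 0 ≤ Real.log n := Real.log_natCast_nonneg n
  calc _ ≤ ((2 * Real.log n + 2) * √(k.natAbs * n)) / ((n : ℝ) ^ (3 / 4 : ℝ) / 4) := by
        refine div_le_div₀ (by positivity) (hsum.trans ?_) (by positivity) (by linarith)
        gcongr
    _ = _ := by
        rw [hsplit, Real.sqrt_mul (by positivity)]
        field_simp
        ring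

theorem tendsto_log_add_one_div_rpow :
    Tendsto (fun n : ℕ => (Real.log n + 1) / (n : ℝ) ^ (1 / 4 : ℝ)) atTop (𝓝 0) := by
  have hr : (0 : ℝ) < 1 / 4 := by norm_num
  have h := ((isLittleO_log_rpow_atTop hr).tendsto_div_nhds_zero.add
    ((tendsto_rpow_atTop hr).const_div_atTop 1)).comp tendsto_natCast_atTop_atTop
  rw [add_zero] at h
  exact h.congr fun n => by simp [add_div]

theorem witnessSet_nonempty {n : ℕ} (hodd : Odd n) (hn : ¬ n.Prime) (h1 : 1 < n) :
    (witnessSet n).Nonempty := by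
  rw [← card_pos]
  have := totient_le_two_mul_card_witnessSet hodd hn h1
  have := Nat.totient_pos.2 (zero_lt_one.trans h1)
  omega

theorem div_mem_Ioo_of_mem_witnessSet {n w : ℕ} (hw : w ∈ witnessSet n) :
    (w : ℝ) / n ∈ Set.Ioo (0 : ℝ) 1 := by
  obtain ⟨hwn, h1, -⟩ := mem_filter.1 hw
  rw [Finset.mem_range] at hwn
  have hn : (0 : ℝ) < n := by exact_mod_cast (Nat.zero_le w).trans_lt hwn
  have hw0 : (0 : ℝ) < w := by exact_mod_cast zero_lt_one.trans h1
  exact ⟨div_pos hw0 hn, (div_lt_one hn).2 (by exact_mod_cast hwn)⟩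

end Asymptotics

/-- Main Theorem: the normalized Miller-Rabin witness sets become
equidistributed in [0,1] as n → ∞ through odd composite integers. -/
theorem witness_equidistribution (a b : ℝ) (ha : 0 ≤ a) (hab : a ≤ b) (hb : b ≤ 1) :
    Tendsto (fun n : ℕ =>
        (((witnessSet n).filter (fun w : ℕ => a ≤ (w : ℝ) / n ∧ (w : ℝ) / n ≤ b)).card : ℝ) /
          ((witnessSet n).card : ℝ))
      (atTop ⊓ Filter.principal {n : ℕ | Odd n ∧ ¬ n.Prime ∧ 1 < n}) (nhds (b - a)) := by
  have hmem : ∀ᶠ n : ℕ in atTop ⊓ Filter.principal {n : ℕ | Odd n ∧ ¬ n.Prime ∧ 1 < n},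
      Odd n ∧ ¬ n.Prime ∧ 1 < n :=
    Filter.mem_inf_of_right (Filter.mem_principal_self _)
  refine tendsto_card_filter_div_card_of_fourier witnessSet (fun n w => (w : ℝ) / n) ?_ ?_ ?_
    ha hab hb
  · filter_upwards [hmem] with n ⟨hodd, hn, h1⟩ using witnessSet_nonempty hodd hn h1
  · exact .of_forall fun n w hw => div_mem_Ioo_of_mem_witnessSet hw
  · intro k hk
    refine squeeze_zero_norm' (a := fun n : ℕ =>
      8 * √k.natAbs * ((Real.log n + 1) / (n : ℝ) ^ (1 / 4 : ℝ))) ?_ ?_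
    · filter_upwards [hmem] with n ⟨hodd, hn, h1⟩ using
        norm_sum_fourier_witnessSet_div_card_le hodd hn h1 hk
    · simpa using (tendsto_log_add_one_div_rpow.mono_left inf_le_left).const_mul (8 * √k.natAbs)
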